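/- Let E_1, …, E_n be Banach spaces of cotype 2. Then for every Banach space F, a continuous n-linear map A : E_1 × ⋯ × E_n → F is absolutely (1/n;1,…,1)-summing if and only if it is absolutely (2/n;2,…,2)-summing. -/

import Mathlib

open scoped BigOperators NNReal ENNReal

/-- The weak `ℓ_r` norm of a finite family `(x_j)` in a normed space:
`sup_{‖φ‖ ≤ 1} (∑_j ‖φ(x_j)‖^r)^(1/r)`. -/
noncomputable def weakNorm (𝕜 : Type*) [RCLike 𝕜] {E : Type*} [NormedAddCommGroup E]
    [NormedSpace 𝕜 E] (r : ℝ) {m : ℕ} (x : Fin m → E) : ℝ :=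
  ⨆ φ : {φ : E →L[𝕜] 𝕜 // ‖φ‖ ≤ 1}, (∑ j, ‖φ.1 (x j)‖ ^ r) ^ (1 / r)

/-- The Rademacher norm of a finite family `(x_j)_{j=1}^m` in a normed space:
`(2^{-m} ∑_{ε ∈ {-1,1}^m} ‖∑_j ε_j x_j‖²)^{1/2}`. -/
noncomputable def radNorm {E : Type*} [NormedAddCommGroup E] {m : ℕ} (x : Fin m → E) : ℝ :=
  ((∑ ε : Fin m → Bool, ‖∑ j, (if ε j then x j else -x j)‖ ^ 2) / (2 : ℝ) ^ m) ^ ((1 : ℝ) / 2)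

/-- A continuous multilinear map is absolutely `(p; p₁, …, pₙ)`-summing. -/
def IsAbsSumming {𝕜 : Type*} [RCLike 𝕜] {n : ℕ} {E : Fin n → Type*}
    [∀ i, NormedAddCommGroup (E i)] [∀ i, NormedSpace 𝕜 (E i)]
    {F : Type*} [NormedAddCommGroup F] [NormedSpace 𝕜 F]
    (p : ℝ) (ps : Fin n → ℝ) (A : ContinuousMultilinearMap 𝕜 E F) : Prop :=
  ∃ C > 0, ∀ (m : ℕ) (x : ∀ i, Fin m → E i),
    (∑ j, ‖A (fun i => x i j)‖ ^ p) ^ (1 / p) ≤ C * ∏ i, weakNorm 𝕜 (ps i) (x i)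

/-- A Banach space has cotype 2. -/
def HasCotype2 (X : Type*) [NormedAddCommGroup X] : Prop :=
  ∃ C > 0, ∀ (m : ℕ) (x : Fin m → X),
    (∑ j, ‖x j‖ ^ 2) ^ ((1 : ℝ) / 2) ≤ C * radNorm x

namespace Cot2

variable {𝕜 : Type*} [RCLike 𝕜]

/-- signed sum -/
noncomputable def ss {X : Type*} [AddCommGroup X] {N : ℕ} (ε : Fin N → Bool) (a : Fin N → X) : X :=
  ∑ k, (if ε k then a k else -a k)

lemma sum_bool_succ {N : ℕ} (g : (Fin (N+1) → Bool) → ℝ) :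
    ∑ ε, g ε = ∑ ε : Fin N → Bool, (g (Fin.cons true ε) + g (Fin.cons false ε)) := by
  rw [← (Fin.consEquiv (fun _ : Fin (N+1) => Bool)).sum_comp, Fintype.sum_prod_type]
  simp [Finset.sum_add_distrib, Fin.consEquiv]

lemma ss_true {X : Type*} [AddCommGroup X] {N : ℕ} (ε : Fin N → Bool) (a : Fin (N+1) → X) :
    ss (Fin.cons true ε : Fin (N+1) → Bool) a = ss ε (fun k => a k.succ) + a 0 := by
  simp [ss, Fin.sum_univ_succ, add_comm]

lemma ss_false {X : Type*} [AddCommGroup X] {N : ℕ} (ε : Fin N → Bool) (a : Fin (N+1) → X) :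
    ss (Fin.cons false ε : Fin (N+1) → Bool) a = ss ε (fun k => a k.succ) - a 0 := by
  simp [ss, Fin.sum_univ_succ, sub_eq_add_neg, add_comm]

lemma para (s a : 𝕜) : ‖s + a‖^2 + ‖s - a‖^2 = 2 * (‖s‖^2 + ‖a‖^2) := by
  have := parallelogram_law_with_norm 𝕜 s a
  nlinarith

lemma four (s a : 𝕜) :
    ‖s + a‖^4 + ‖s - a‖^4 ≤ 2 * ‖s‖^4 + 2 * ‖a‖^4 + 12 * (‖s‖^2 * ‖a‖^2) := by
  have h := para s a
  have h1 : ‖s + a‖^2 ≤ (‖s‖ + ‖a‖)^2 := by gcongr; exact norm_add_le _ _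
  have h2 : ‖s - a‖^2 ≤ (‖s‖ + ‖a‖)^2 := by gcongr; exact norm_sub_le _ _
  have e1 : ‖s + a‖^4 = (‖s + a‖^2)^2 := by ring
  have e2 : ‖s - a‖^4 = (‖s - a‖^2)^2 := by ring
  rw [e1, e2]
  generalize ‖s + a‖^2 = p at *
  generalize ‖s - a‖^2 = q at *
  obtain rfl : q = 2 * (‖s‖^2 + ‖a‖^2) - p := by linarith
  have : (p - (‖s‖^2+‖a‖^2))^2 ≤ (2 * ‖s‖ * ‖a‖)^2 := by
    apply sq_le_sq'  <;> nlinarith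
  nlinarith

lemma second {N : ℕ} (a : Fin N → 𝕜) : ∑ ε, ‖ss ε a‖^2 = 2^N * ∑ k, ‖a k‖^2 := by
  induction N with
  | zero => simp [ss]
  | succ N ih =>
    rw [sum_bool_succ]
    simp_rw [ss_true, ss_false, para]
    rw [← Finset.mul_sum, Finset.sum_add_distrib, ih, Fin.sum_univ_succ]
    simp
    ring

lemma fourth {N : ℕ} (a : Fin N → 𝕜) :
    ∑ ε, ‖ss ε a‖^4 ≤ 3 * 2^N * (∑ k, ‖a k‖^2)^2 := by
  induction N with
  | zero => simp [ss]
  | succ N ih =>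
    rw [sum_bool_succ]
    simp_rw [ss_true, ss_false]
    refine (Finset.sum_le_sum fun ε _ => four _ _).trans ?_
    rw [Finset.sum_add_distrib, Finset.sum_add_distrib, ← Finset.mul_sum, ← Finset.mul_sum,
      ← Finset.mul_sum, ← Finset.sum_mul, second, Fin.sum_univ_succ]
    have := ih (fun k => a k.succ)
    simp only [Finset.sum_const, Finset.card_univ, Fintype.card_pi, Fintype.card_bool,
      Finset.prod_const, Fintype.card_fin, nsmul_eq_mul, Nat.cast_pow, Nat.cast_ofNat]
    have h0 : 0 ≤ (2:ℝ)^N * ‖a 0‖^4 := by positivity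
    generalize ∑ k : Fin N, ‖a k.succ‖^2 = σ at *
    rw [pow_succ (2:ℝ) N]
    nlinarith

section
variable {E : Type*} [NormedAddCommGroup E] [NormedSpace 𝕜 E] {m : ℕ}

/-- the operator -/
noncomputable def U (x : Fin m → E) (a : Fin m → 𝕜) : E := ∑ j, a j • x j

lemma U_ss (x : Fin m → E) {N : ℕ} (ε : Fin N → Bool) (a : Fin N → Fin m → 𝕜) :
    U x (fun j => ss ε (fun k => a k j)) = ss ε (fun k => U x (a k)) := by
  unfold U ss
  simp_rw [Finset.sum_smul]
  rw [Finset.sum_comm]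
  refine Finset.sum_congr rfl fun k _ => ?_
  split_ifs <;> simp

lemma U_smul (x : Fin m → E) (t : 𝕜) (a : Fin m → 𝕜) :
    U x (fun j => t * a j) = t • U x a := by
  simp [U, Finset.smul_sum, mul_smul]

/-- domination -/
def Dom (𝕜 : Type*) [RCLike 𝕜] {E : Type*} [NormedAddCommGroup E] [NormedSpace 𝕜 E] {m : ℕ}
    (x : Fin m → E) (Q : ℝ) (μ : Fin m → ℝ) : Prop :=
  (∀ j, 0 ≤ μ j) ∧ ∑ j, μ j = 1 ∧ ∀ a : Fin m → 𝕜, ‖U x a‖^2 ≤ Q * ∑ j, μ j * ‖a j‖^2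

lemma trunc (x : Fin m → E)
    (hx : ∀ (s : ℝ) (a : Fin m → 𝕜), 0 ≤ s → (∀ j, ‖a j‖ ≤ s) → ‖U x a‖ ≤ s)
    {Q : ℝ} (hQ : 0 ≤ Q) {μ : Fin m → ℝ} (h : Dom 𝕜 x Q μ) (a : Fin m → 𝕜) :
    ‖U x a‖^4 ≤ 16 * Q * ∑ j, μ j * ‖a j‖^4 := by
  obtain ⟨h0, -, h2⟩ := h
  have hT : 0 ≤ ∑ j, μ j * ‖a j‖^4 := Finset.sum_nonneg fun j _ => by have := h0 j; positivity
  rcases (norm_nonneg (U x a)).eq_or_lt with hz | hz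
  · rw [← hz]; simp; positivity
  set s := ‖U x a‖ / 2 with hs
  have hs0 : 0 < s := by positivity
  have hsplit : U x a = U x (fun j => if ‖a j‖ ≤ s then a j else 0)
      + U x (fun j => if ‖a j‖ ≤ s then 0 else a j) := by
    unfold U
    rw [← Finset.sum_add_distrib]
    refine Finset.sum_congr rfl fun j _ => ?_
    dsimp only
    split_ifs <;> simp
  have hA : ‖U x (fun j => if ‖a j‖ ≤ s then a j else 0)‖ ≤ s := by
    apply hx s _ hs0.le
    intro j
    split_ifs with hj
    · exact hj
    · simpa using hs0.le
  have hB := h2 (fun j => if ‖a j‖ ≤ s then 0 else a j)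
  have hC : s ≤ ‖U x (fun j => if ‖a j‖ ≤ s then 0 else a j)‖ := by
    have := norm_add_le (U x (fun j => if ‖a j‖ ≤ s then a j else 0))
      (U x (fun j => if ‖a j‖ ≤ s then 0 else a j))
    rw [← hsplit] at this
    linarith
  have hD : s^2 * ∑ j, μ j * ‖(if ‖a j‖ ≤ s then 0 else a j)‖^2 ≤ ∑ j, μ j * ‖a j‖^4 := by
    rw [Finset.mul_sum]
    refine Finset.sum_le_sum fun j _ => ?_
    have := h0 j
    split_ifs with hj
    · simp; positivity
    · push Not at hj
      have : s^2 ≤ ‖a j‖^2 := by gcongr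
      calc s^2 * (μ j * ‖a j‖^2) ≤ ‖a j‖^2 * (μ j * ‖a j‖^2) := by gcongr
        _ = _ := by ring
  have hE : s^2 ≤ ‖U x (fun j => if ‖a j‖ ≤ s then 0 else a j)‖^2 := by gcongr
  have hF : s^4 ≤ Q * ∑ j, μ j * ‖a j‖^4 := by
    calc s^4 = s^2 * s^2 := by ring
      _ ≤ s^2 * (Q * ∑ j, μ j * ‖(if ‖a j‖ ≤ s then 0 else a j)‖^2) := by
        gcongr; exact hE.trans hB
      _ = Q * (s^2 * ∑ j, μ j * ‖(if ‖a j‖ ≤ s then 0 else a j)‖^2) := by ring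
      _ ≤ _ := by gcongr
  have : ‖U x a‖^4 = 16 * s^4 := by rw [hs]; ring
  rw [this]; linarith

lemma cot_sq {C : ℝ}
    (hcot : ∀ (m : ℕ) (x : Fin m → E), (∑ j, ‖x j‖ ^ 2) ^ ((1 : ℝ) / 2) ≤ C * radNorm x)
    {N : ℕ} (z : Fin N → E) :
    2^N * ∑ k, ‖z k‖^2 ≤ C^2 * ∑ ε, ‖ss ε z‖^2 := by
  have h := hcot N z
  unfold radNorm at h
  rw [← Real.sqrt_eq_rpow, ← Real.sqrt_eq_rpow] at h
  have h1 : (0:ℝ) ≤ ∑ k, ‖z k‖^2 := by positivity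
  have h2 : (0:ℝ) ≤ (∑ ε, ‖ss ε z‖^2) / 2^N := by positivity
  have h3 := pow_le_pow_left₀ (Real.sqrt_nonneg _) h 2
  rw [mul_pow, Real.sq_sqrt h1] at h3
  change _ ≤ C^2 * (√((∑ ε, ‖ss ε z‖^2) / 2^N))^2 at h3
  rw [Real.sq_sqrt h2] at h3
  have : (0:ℝ) < 2^N := by positivity
  rw [← mul_div_assoc, le_div_iff₀ this] at h3
  linarith

lemma stepB {C : ℝ} (hC : 0 < C)
    (hcot : ∀ (m : ℕ) (x : Fin m → E), (∑ j, ‖x j‖ ^ 2) ^ ((1 : ℝ) / 2) ≤ C * radNorm x)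
    (x : Fin m → E)
    (hx : ∀ (s : ℝ) (a : Fin m → 𝕜), 0 ≤ s → (∀ j, ‖a j‖ ≤ s) → ‖U x a‖ ≤ s)
    {Q : ℝ} (hQ : 0 ≤ Q) {μ : Fin m → ℝ} (h : Dom 𝕜 x Q μ) {N : ℕ} (a : Fin N → Fin m → 𝕜)
    (M : ℝ) (hM : 0 ≤ M) (ha : ∀ j, ∑ k, ‖a k j‖^2 ≤ M) :
    ∑ k, ‖U x (a k)‖^2 ≤ (7 * C^2 * √Q) * M := by
  have h1 := cot_sq hcot (fun k => U x (a k))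
  have h2 : (∑ ε, ‖ss ε (fun k => U x (a k))‖^2)^2
      ≤ 2^N * ∑ ε, ‖ss ε (fun k => U x (a k))‖^4 := by
    have := sq_sum_le_card_mul_sum_sq (s := (Finset.univ : Finset (Fin N → Bool)))
      (f := fun ε => ‖ss ε (fun k => U x (a k))‖^2)
    simpa [← pow_mul] using this
  have h3 : ∑ ε, ‖ss ε (fun k => U x (a k))‖^4 ≤ 16 * Q * (3 * 2^N * M^2) := by
    calc ∑ ε, ‖ss ε (fun k => U x (a k))‖^4
        ≤ ∑ ε : Fin N → Bool, 16 * Q * ∑ j, μ j * ‖ss ε (fun k => a k j)‖^4 := by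
          refine Finset.sum_le_sum fun ε _ => ?_
          rw [← U_ss]
          exact trunc x hx hQ h _
      _ = 16 * Q * ∑ j, μ j * ∑ ε : Fin N → Bool, ‖ss ε (fun k => a k j)‖^4 := by
          rw [← Finset.mul_sum, Finset.sum_comm]
          simp_rw [← Finset.mul_sum]
      _ ≤ 16 * Q * ∑ j, μ j * (3 * 2^N * M^2) := by
          gcongr with j _
          · exact h.1 j
          · refine (fourth _).trans ?_
            have := ha j
            gcongr
      _ = _ := by rw [← Finset.sum_mul, h.2.1, one_mul]
  have h4 : ∑ ε, ‖ss ε (fun k => U x (a k))‖^2 ≤ 2^N * (7 * √Q * M) := by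
    apply le_of_sq_le_sq _ (by positivity)
    have hq := Real.sq_sqrt hQ
    calc _ ≤ _ := h2
      _ ≤ 2^N * (16 * Q * (3 * 2^N * M^2)) := by gcongr
      _ = 48 * ((2^N)^2 * Q * M^2) := by ring
      _ ≤ 49 * ((2^N)^2 * Q * M^2) := by
        have : 0 ≤ ((2^N)^2 * Q * M^2) := by positivity
        linarith
      _ = (2^N * (7 * √Q * M))^2 := by
        rw [mul_pow, mul_pow, mul_pow, hq]; ring
  have : (0:ℝ) < 2^N := by positivity
  refine le_of_mul_le_mul_left ?_ this
  calc _ ≤ _ := h1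
    _ ≤ C^2 * (2^N * (7 * √Q * M)) := by gcongr
    _ = _ := by ring

lemma pietsch [Nonempty (Fin m)] (x : Fin m → E) {Q : ℝ}
    (h : ∀ (N : ℕ) (a : Fin N → Fin m → 𝕜) (M : ℝ), 0 ≤ M → (∀ j, ∑ k, ‖a k j‖^2 ≤ M) →
      ∑ k, ‖U x (a k)‖^2 ≤ Q * M) : ∃ μ, Dom 𝕜 x Q μ := by
  let V : ∀ N, (Fin N → Fin m → 𝕜) → (Fin m → ℝ) := fun N a j =>
    Q * ∑ k, ‖a k j‖^2 - ∑ k, ‖U x (a k)‖^2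
  let T : Set (Fin m → ℝ) := {v | ∃ N a, v = V N a}
  let S : Set (Fin m → ℝ) := Set.univ.pi fun _ => Set.Iio 0
  have hSc : Convex ℝ S := convex_pi fun _ _ => convex_Iio 0
  have hSo : IsOpen S := isOpen_set_pi Set.finite_univ fun _ _ => isOpen_Iio
  have hsc : ∀ (t : ℝ), 0 ≤ t → ∀ N a, ∃ b, t • V N a = V N b := by
    intro t ht N a
    refine ⟨fun k j => ((√t : ℝ) : 𝕜) * a k j, ?_⟩
    have hn : ‖((√t : ℝ) : 𝕜)‖^2 = t := by
      rw [RCLike.norm_ofReal, sq_abs, Real.sq_sqrt ht]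
    ext j
    simp only [V, U_smul, norm_mul, norm_smul, mul_pow, hn, Pi.smul_apply, smul_eq_mul,
      ← Finset.mul_sum]
    ring
  have had : ∀ N a N' a', ∃ b, V N a + V N' a' = V (N + N') b := by
    intro N a N' a'
    refine ⟨Fin.append a a', ?_⟩
    ext j
    simp only [V, Fin.sum_univ_add, Fin.append_left, Fin.append_right, Pi.add_apply]
    ring
  have hTc : Convex ℝ T := by
    rintro _ ⟨N, a, rfl⟩ _ ⟨N', a', rfl⟩ s t hs ht -
    obtain ⟨b, hb⟩ := hsc s hs N a
    obtain ⟨b', hb'⟩ := hsc t ht N' a'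
    obtain ⟨c, hc⟩ := had N b N' b'
    exact ⟨_, c, by rw [hb, hb', hc]⟩
  have hdisj : Disjoint S T := by
    rw [Set.disjoint_left]
    rintro _ hv ⟨N, a, rfl⟩
    obtain ⟨j0, hj0⟩ := Finite.exists_max fun j => ∑ k, ‖a k j‖^2
    have h1 := h N a (∑ k, ‖a k j0‖^2) (by positivity) hj0
    have h2 : V N a j0 < 0 := hv j0 (Set.mem_univ _)
    simp only [V] at h2
    linarith
  obtain ⟨f, u, hf1, hf2⟩ := geometric_hahn_banach_open hSc hSo hTc hdisj
  have hu : u ≤ 0 := by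
    have := hf2 0 ⟨0, fun k => k.elim0, by ext j; simp [V]⟩
    simpa using this
  have hf3 : ∀ v : Fin m → ℝ, (∀ j, v j < 0) → f v < u := fun v hv =>
    hf1 v fun j _ => hv j
  have hone : 0 < f (fun _ => 1) := by
    have := hf3 (-(fun _ => 1)) (fun j => by simp)
    rw [map_neg] at this
    linarith
  have hu0 : 0 ≤ u := by
    by_contra hlt
    push Not at hlt
    have := hf3 ((u / f (fun _ => 1)) • (fun _ => 1)) (fun j => by
      simpa using div_neg_of_neg_of_pos hlt hone)
    rw [map_smul, smul_eq_mul, div_mul_cancel₀ _ hone.ne'] at this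
    exact lt_irrefl _ this
  have hsum : ∀ v : Fin m → ℝ, f v = ∑ j, v j * f (Pi.single j 1) := by
    intro v
    conv_lhs => rw [← Finset.univ_sum_single v]
    rw [map_sum]
    refine Finset.sum_congr rfl fun j _ => ?_
    rw [← smul_eq_mul, ← map_smul]
    congr 1
    ext i
    by_cases hij : i = j
    · subst hij; simp
    · simp [hij]
  have hnn : ∀ j, 0 ≤ f (Pi.single j 1) := by
    intro j
    by_contra hlt
    push Not at hlt
    have := hf3 (-(Pi.single j 1) + (f (Pi.single j 1) / f (fun _ => 1)) • (fun _ => 1)) (fun i => by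
      have h1 := div_neg_of_neg_of_pos hlt hone
      have h2 : (0:ℝ) ≤ (Pi.single j 1 : Fin m → ℝ) i := by
        by_cases hij : i = j
        · subst hij; simp
        · simp [hij]
      simp only [Pi.add_apply, Pi.neg_apply, Pi.smul_apply, smul_eq_mul, mul_one]
      linarith)
    rw [map_add, map_neg, map_smul, smul_eq_mul, div_mul_cancel₀ _ hone.ne'] at this
    linarith
  refine ⟨fun j => f (Pi.single j 1) / f (fun _ => 1), fun j => div_nonneg (hnn j) hone.le, ?_, ?_⟩
  · rw [← Finset.sum_div, div_eq_one_iff_eq hone.ne', hsum (fun _ => 1)]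
    simp
  · intro a
    have h1 := hf2 _ ⟨1, fun _ => a, rfl⟩
    rw [hsum] at h1
    simp only [V, Fin.sum_univ_one] at h1
    have h2 : 0 ≤ ∑ j, (Q * ‖a j‖^2 - ‖U x a‖^2) * f (Pi.single j 1) := by simpa using hu0.trans h1
    simp_rw [sub_mul] at h2
    rw [Finset.sum_sub_distrib, ← Finset.mul_sum] at h2
    have h3 := hsum (fun _ => 1)
    simp only [one_mul] at h3
    rw [← h3] at h2
    have h4 : ∑ j, f (Pi.single j 1) / f (fun _ => 1) * ‖a j‖^2
        = (∑ j, ‖a j‖^2 * f (Pi.single j 1)) / f (fun _ => 1) := by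
      rw [Finset.sum_div]
      refine Finset.sum_congr rfl fun j _ => by ring
    rw [h4, ← mul_div_assoc, le_div_iff₀ hone, Finset.mul_sum]
    simp_rw [← mul_assoc]
    linarith

lemma domExists [Nonempty (Fin m)] {C : ℝ} (hC : 0 < C)
    (hcot : ∀ (m : ℕ) (x : Fin m → E), (∑ j, ‖x j‖ ^ 2) ^ ((1 : ℝ) / 2) ≤ C * radNorm x)
    (x : Fin m → E)
    (hx : ∀ (s : ℝ) (a : Fin m → 𝕜), 0 ≤ s → (∀ j, ‖a j‖ ≤ s) → ‖U x a‖ ≤ s) :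
    ∃ μ, Dom 𝕜 x (49 * C^4 + 1) μ := by
  have hmono : ∀ {Q Q' : ℝ} {μ}, Q ≤ Q' → Dom 𝕜 x Q μ → Dom 𝕜 x Q' μ := by
    rintro Q Q' μ hQ ⟨h1, h2, h3⟩
    refine ⟨h1, h2, fun a => (h3 a).trans ?_⟩
    have : 0 ≤ ∑ j, μ j * ‖a j‖^2 := Finset.sum_nonneg fun j _ => by have := h1 j; positivity
    gcongr
  let D : Set ℝ := {Q | 0 < Q ∧ ∃ μ, Dom 𝕜 x Q μ}
  have hstep : ∀ Q ∈ D, 7 * C^2 * √Q ∈ D := by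
    rintro Q ⟨hQ, μ, h⟩
    have : 0 < 7 * C^2 * √Q := by have := Real.sqrt_pos.2 hQ; positivity
    exact ⟨this, pietsch x fun N a M hM ha => stepB hC hcot x hx hQ.le h a M hM ha⟩
  have hm : (0:ℝ) < m := by
    have := Fin.pos_iff_nonempty.2 ‹_›
    exact_mod_cast this
  have hne : D.Nonempty := by
    refine ⟨m, hm, fun _ => 1 / m, fun j => by positivity, ?_, fun a => ?_⟩
    · simp [hm.ne']
    · rw [← Finset.mul_sum, ← mul_assoc, mul_one_div_cancel hm.ne', one_mul]
      obtain ⟨j0, hj0⟩ := Finite.exists_max fun j => ‖a j‖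
      have := hx ‖a j0‖ a (norm_nonneg _) hj0
      calc _ ≤ ‖a j0‖^2 := by gcongr
        _ ≤ _ := Finset.single_le_sum (f := fun j => ‖a j‖^2) (fun j _ => by positivity)
          (Finset.mem_univ j0)
  have hbdd : BddBelow D := ⟨0, fun Q hQ => hQ.1.le⟩
  by_contra hcon
  have hlow : ∀ Q ∈ D, 49 * C^4 + 1 ≤ Q := by
    intro Q hQ
    by_contra hlt
    push Not at hlt
    obtain ⟨_, μ, h⟩ := hQ
    exact hcon ⟨μ, hmono hlt.le h⟩
  set K := sInf D
  have hK : 49 * C^4 + 1 ≤ K := le_csInf hne hlow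
  have hC4 : 0 < C^4 := by positivity
  have hKpos : 0 < K := by linarith
  have h1 : ∀ Q ∈ D, K^2 / (49 * C^4) ≤ Q := by
    intro Q hQ
    have h2 : K ≤ 7 * C^2 * √Q := csInf_le hbdd (hstep Q hQ)
    have h3 : K^2 ≤ (7 * C^2 * √Q)^2 := by gcongr
    rw [mul_pow, Real.sq_sqrt hQ.1.le] at h3
    rw [div_le_iff₀ (by positivity)]
    nlinarith
  have h2 := le_csInf hne h1
  rw [div_le_iff₀ (by positivity)] at h2
  change K^2 ≤ K * (49 * C^4) at h2
  nlinarith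

lemma weakNorm_bdd (x : Fin m → E) {r : ℝ} (hr : 0 < r) :
    BddAbove (Set.range fun φ : {φ : E →L[𝕜] 𝕜 // ‖φ‖ ≤ 1} =>
      (∑ j, ‖φ.1 (x j)‖ ^ r) ^ (1 / r)) := by
  refine ⟨(∑ j, ‖x j‖ ^ r) ^ (1 / r), ?_⟩
  rintro _ ⟨φ, rfl⟩
  dsimp only
  gcongr with j
  exact (φ.1.le_of_opNorm_le φ.2 _).trans (by simp)

lemma le_weakNorm (x : Fin m → E) {r : ℝ} (hr : 0 < r) (φ : E →L[𝕜] 𝕜) (hφ : ‖φ‖ ≤ 1) :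
    (∑ j, ‖φ (x j)‖ ^ r) ^ (1 / r) ≤ weakNorm 𝕜 r x :=
  le_ciSup (weakNorm_bdd x hr) ⟨φ, hφ⟩

lemma weakNorm_le (x : Fin m → E) {r : ℝ} {B : ℝ}
    (h : ∀ φ : E →L[𝕜] 𝕜, ‖φ‖ ≤ 1 → (∑ j, ‖φ (x j)‖ ^ r) ^ (1 / r) ≤ B) :
    weakNorm 𝕜 r x ≤ B := by
  have : Nonempty {φ : E →L[𝕜] 𝕜 // ‖φ‖ ≤ 1} := ⟨⟨0, by simp⟩⟩
  exact ciSup_le fun φ => h φ.1 φ.2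

lemma weakNorm_nonneg (x : Fin m → E) (r : ℝ) : 0 ≤ weakNorm 𝕜 r x :=
  Real.iSup_nonneg fun φ => by positivity

lemma U_le (x : Fin m → E) (s : ℝ) (a : Fin m → 𝕜) (hs : 0 ≤ s) (ha : ∀ j, ‖a j‖ ≤ s) :
    ‖U x a‖ ≤ s * weakNorm 𝕜 1 x := by
  obtain ⟨φ, hφ, h⟩ := exists_dual_vector'' 𝕜 (U x a)
  have h1 := le_weakNorm x one_pos φ hφ
  simp only [Real.rpow_one, div_one] at h1
  calc ‖U x a‖ = ‖φ (U x a)‖ := by rw [h]; simp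
    _ = ‖∑ j, a j * φ (x j)‖ := by simp [U]
    _ ≤ ∑ j, ‖a j‖ * ‖φ (x j)‖ := (norm_sum_le _ _).trans (by simp)
    _ ≤ ∑ j, s * ‖φ (x j)‖ := by gcongr with j; exact ha j
    _ = s * ∑ j, ‖φ (x j)‖ := by rw [Finset.mul_sum]
    _ ≤ _ := by gcongr

lemma U_single (x : Fin m → E) (j : Fin m) : U x (Pi.single j (1:𝕜)) = x j := by
  unfold U
  rw [Finset.sum_eq_single j]
  · simp
  · intro i _ hij; simp [hij]
  · simp

lemma norm_le_weak (x : Fin m → E) (j : Fin m) : ‖x j‖ ≤ weakNorm 𝕜 1 x := by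
  have := U_le (𝕜 := 𝕜) x 1 (Pi.single j 1) zero_le_one (fun i => by
    by_cases hij : i = j
    · subst hij; simp
    · simp [hij])
  rwa [U_single, one_mul] at this

/-- factorization, normalized -/
lemma factor1 [Nonempty (Fin m)] {C : ℝ} (hC : 0 < C)
    (hcot : ∀ (m : ℕ) (x : Fin m → E), (∑ j, ‖x j‖ ^ 2) ^ ((1 : ℝ) / 2) ≤ C * radNorm x)
    (x : Fin m → E)
    (hx : ∀ (s : ℝ) (a : Fin m → 𝕜), 0 ≤ s → (∀ j, ‖a j‖ ≤ s) → ‖U x a‖ ≤ s) :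
    ∃ (l : Fin m → ℝ) (y : Fin m → E), (∀ j, 0 ≤ l j) ∧ ∑ j, l j ^ 2 = 1 ∧
      (∀ j, x j = (l j : 𝕜) • y j) ∧ weakNorm 𝕜 2 y ≤ √(49 * C^4 + 1) := by
  obtain ⟨μ, h0, h1, h2⟩ := domExists hC hcot x hx
  have hQ : 0 ≤ 49 * C^4 + 1 := by positivity
  set Q := 49 * C^4 + 1
  have hl : ∀ j, √(μ j)^2 = μ j := fun j => Real.sq_sqrt (h0 j)
  refine ⟨fun j => √(μ j), fun j => (((√(μ j))⁻¹ : ℝ) : 𝕜) • x j,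
    fun j => Real.sqrt_nonneg _, ?_, ?_, ?_⟩
  · simp_rw [hl]; exact h1
  · intro j
    dsimp only
    by_cases hj : μ j = 0
    · have := h2 (Pi.single j 1)
      rw [U_single, Finset.sum_eq_single j] at this
      · rw [hj] at this
        have : x j = 0 := by
          rw [← norm_eq_zero]
          nlinarith [norm_nonneg (x j)]
        simp [this]
      · intro i _ hij; simp [hij]
      · simp
    · have : √(μ j) ≠ 0 := by rw [Ne, Real.sqrt_eq_zero (h0 j)]; exact hj
      rw [smul_smul, ← RCLike.ofReal_mul, mul_inv_cancel₀ this]; simp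
  · apply weakNorm_le
    intro φ hφ
    rw [← Real.sqrt_eq_rpow]
    apply Real.sqrt_le_sqrt
    simp only [Real.rpow_two]
    set w : Fin m → 𝕜 := fun j => φ ((((√(μ j))⁻¹ : ℝ) : 𝕜) • x j) with hw
    change ∑ j, ‖w j‖^2 ≤ Q
    set D := ∑ j, ‖w j‖^2 with hD
    have hD0 : 0 ≤ D := by positivity
    set b : Fin m → 𝕜 := fun j => (starRingEnd 𝕜) (w j) * (((√(μ j))⁻¹ : ℝ) : 𝕜) with hb
    have e1 : φ (U x b) = (D : 𝕜) := by
      rw [U, map_sum, hD]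
      push_cast
      refine Finset.sum_congr rfl fun j _ => ?_
      rw [hb, ← RCLike.conj_mul]
      simp [hw, mul_assoc]
    have e2 : D ≤ ‖U x b‖ := by
      have := φ.le_of_opNorm_le hφ (U x b)
      rw [e1, RCLike.norm_ofReal, abs_of_nonneg hD0, one_mul] at this
      exact this
    have e3 : ∑ j, μ j * ‖b j‖^2 ≤ D := by
      refine Finset.sum_le_sum fun j _ => ?_
      rw [hb]
      simp only [norm_mul, RCLike.norm_conj, RCLike.norm_ofReal, mul_pow, sq_abs, inv_pow, hl]
      by_cases hj : μ j = 0
      · rw [hj]; simp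
      · field_simp; rfl
    have e4 : D^2 ≤ Q * D := by
      calc D^2 ≤ ‖U x b‖^2 := by gcongr
        _ ≤ _ := h2 b
        _ ≤ _ := by gcongr
    by_contra hlt
    push Not at hlt
    nlinarith

lemma factor (hcot : HasCotype2 E) :
    ∃ K > 0, ∀ (m : ℕ) (_ : Nonempty (Fin m)) (x : Fin m → E),
    ∃ (l : Fin m → ℝ) (y : Fin m → E), (∀ j, 0 ≤ l j) ∧ ∑ j, l j ^ 2 = 1 ∧
      (∀ j, x j = ((weakNorm 𝕜 1 x * l j : ℝ) : 𝕜) • y j) ∧ weakNorm 𝕜 2 y ≤ K := by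
  obtain ⟨C, hC, hcot⟩ := hcot
  refine ⟨√(49 * C^4 + 1), by positivity, fun m _ x => ?_⟩
  set W := weakNorm 𝕜 1 x with hW
  have hW0 : 0 ≤ W := weakNorm_nonneg x 1
  obtain ⟨l, y, h1, h2, h3, h4⟩ := factor1 (𝕜 := 𝕜) hC hcot (fun j => ((W⁻¹ : ℝ) : 𝕜) • x j) (by
    intro s a hs ha
    have e : U (fun j => ((W⁻¹ : ℝ) : 𝕜) • x j) a = ((W⁻¹ : ℝ) : 𝕜) • U x a := by
      simp only [U, Finset.smul_sum]
      exact Finset.sum_congr rfl fun j _ => smul_comm _ _ _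
    rw [e, norm_smul, RCLike.norm_ofReal, abs_of_nonneg (by positivity)]
    have := U_le x s a hs ha
    calc W⁻¹ * ‖U x a‖ ≤ W⁻¹ * (s * W) := by gcongr
      _ = s * (W⁻¹ * W) := by ring
      _ ≤ s * 1 := by gcongr; exact inv_mul_le_one
      _ = s := mul_one s)
  refine ⟨l, y, h1, h2, fun j => ?_, h4⟩
  rcases hW0.eq_or_lt with h0 | h0
  · have := norm_le_weak (𝕜 := 𝕜) x j
    rw [← hW, ← h0] at this
    have : x j = 0 := norm_le_zero_iff.1 this
    rw [this, ← h0]; simp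
  · have := h3 j
    rw [RCLike.ofReal_mul, mul_smul, ← this, smul_smul, ← RCLike.ofReal_mul,
      mul_inv_cancel₀ h0.ne']
    simp

lemma weak_mul (x : Fin m → E) (l : Fin m → ℝ) (hl : ∀ j, 0 ≤ l j) :
    weakNorm 𝕜 1 (fun j => (l j : 𝕜) • x j) ≤ √(∑ j, l j ^ 2) * weakNorm 𝕜 2 x := by
  apply weakNorm_le
  intro φ hφ
  have h := le_weakNorm x two_pos φ hφ
  rw [← Real.sqrt_eq_rpow] at h
  simp only [Real.rpow_two] at h
  simp only [Real.rpow_one, div_one, map_smul, norm_smul, RCLike.norm_ofReal, abs_of_nonneg (hl _)]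
  refine (Real.sum_mul_le_sqrt_mul_sqrt _ _ _).trans ?_
  gcongr

end

section
variable {n : ℕ} {E : Fin n → Type*} [∀ i, NormedAddCommGroup (E i)] [∀ i, NormedSpace 𝕜 (E i)]
    {F : Type*} [NormedAddCommGroup F] [NormedSpace 𝕜 F]

lemma dir1 (hn : 1 ≤ n) (A : ContinuousMultilinearMap 𝕜 E F)
    (h : IsAbsSumming (1 / (n : ℝ)) (fun _ => 1) A) :
    IsAbsSumming (2 / (n : ℝ)) (fun _ => 2) A := by
  obtain ⟨C, hC, h⟩ := h
  refine ⟨C, hC, fun m x => ?_⟩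
  have hn0 : (n:ℝ) ≠ 0 := by positivity
  set a : Fin m → ℝ := fun j => ‖A (fun i => x i j)‖ ^ (1 / (n:ℝ)) with ha
  have ha0 : ∀ j, 0 ≤ a j := fun j => by positivity
  have han : ∀ j, a j ^ n = ‖A (fun i => x i j)‖ := fun j => by
    rw [ha, ← Real.rpow_natCast, ← Real.rpow_mul (norm_nonneg _), one_div_mul_cancel hn0,
      Real.rpow_one]
  have h2 : ∀ j, ‖A (fun i => x i j)‖ ^ (2 / (n:ℝ)) = a j ^ 2 := fun j => by
    rw [ha, ← Real.rpow_natCast, ← Real.rpow_mul (norm_nonneg _)]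
    congr 1; push_cast; ring
  simp_rw [h2]
  set S := ∑ j, a j ^ 2 with hS
  have hS0 : 0 ≤ S := by positivity
  have e1 : S ^ (1 / (2 / (n:ℝ))) = √S ^ n := by
    rw [Real.sqrt_eq_rpow, ← Real.rpow_natCast, ← Real.rpow_mul hS0]
    congr 1; field_simp
  rw [e1]
  have hw : 0 ≤ ∏ i, weakNorm 𝕜 2 (x i) := Finset.prod_nonneg fun i _ => weakNorm_nonneg _ _
  rcases hS0.eq_or_lt with h0 | h0
  · rw [← h0, Real.sqrt_zero, zero_pow (by omega)]
    positivity
  have h3 := h m (fun i j => (a j : 𝕜) • x i j)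
  have e2 : ∀ j, ‖A (fun i => (a j : 𝕜) • x i j)‖ ^ (1 / (n:ℝ)) = a j ^ 2 := fun j => by
    rw [A.map_smul_univ (fun _ => (a j : 𝕜)) (fun i => x i j), norm_smul]
    simp only [Finset.prod_const, Finset.card_univ, Fintype.card_fin, norm_pow,
      RCLike.norm_ofReal, abs_of_nonneg (ha0 j)]
    rw [← han j, ← mul_pow, one_div, Real.pow_rpow_inv_natCast (by have := ha0 j; positivity)
      (by omega)]
    ring
  simp_rw [e2] at h3
  rw [one_div_one_div, Real.rpow_natCast] at h3
  have h4 : ∏ i, weakNorm 𝕜 1 (fun j => (a j : 𝕜) • x i j) ≤ √S ^ n * ∏ i, weakNorm 𝕜 2 (x i) := by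
    calc _ ≤ ∏ i, (√S * weakNorm 𝕜 2 (x i)) :=
          Finset.prod_le_prod (fun i _ => weakNorm_nonneg _ _) fun i _ => weak_mul (x i) a ha0
      _ = _ := by rw [Finset.prod_mul_distrib]; simp
  have hpos : 0 < √S ^ n := by have := Real.sqrt_pos.2 h0; positivity
  refine le_of_mul_le_mul_left ?_ hpos
  calc √S ^ n * √S ^ n = S ^ n := by rw [← mul_pow, Real.mul_self_sqrt hS0]
    _ ≤ _ := h3
    _ ≤ C * (√S ^ n * ∏ i, weakNorm 𝕜 2 (x i)) := by gcongr
    _ = _ := by ring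

lemma dir2 (hn : 1 ≤ n) (hcot : ∀ i, HasCotype2 (E i)) (A : ContinuousMultilinearMap 𝕜 E F)
    (h : IsAbsSumming (2 / (n : ℝ)) (fun _ => 2) A) :
    IsAbsSumming (1 / (n : ℝ)) (fun _ => 1) A := by
  obtain ⟨C, hC, h⟩ := h
  choose K hK hfac using fun i => factor (𝕜 := 𝕜) (hcot i)
  have hn0 : (n:ℝ) ≠ 0 := by positivity
  refine ⟨C * ∏ i, K i, mul_pos hC (Finset.prod_pos fun i _ => hK i), fun m x => ?_⟩
  set W := ∏ i, weakNorm 𝕜 1 (x i) with hW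
  have hW0 : 0 ≤ W := Finset.prod_nonneg fun i _ => weakNorm_nonneg _ _
  have hKp : 0 < ∏ i, K i := Finset.prod_pos fun i _ => hK i
  rcases isEmpty_or_nonempty (Fin m) with hm | hm
  · rw [Finset.univ_eq_empty, Finset.sum_empty, one_div_one_div, Real.zero_rpow hn0]
    positivity
  choose l y hl0 hl1 hxy hy using fun i => hfac i m hm (x i)
  set a : Fin m → ℝ := fun j => ‖A (fun i => y i j)‖ ^ (1 / (n:ℝ)) with ha
  have ha0 : ∀ j, 0 ≤ a j := fun j => by positivity
  have h2 : ∀ j, ‖A (fun i => y i j)‖ ^ (2 / (n:ℝ)) = a j ^ 2 := fun j => by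
    rw [ha, ← Real.rpow_natCast, ← Real.rpow_mul (norm_nonneg _)]
    congr 1; push_cast; ring
  have h3 := h m y
  simp_rw [h2] at h3
  set S := ∑ j, a j ^ 2 with hS
  have hS0 : 0 ≤ S := by positivity
  have e1 : S ^ (1 / (2 / (n:ℝ))) = √S ^ n := by
    rw [Real.sqrt_eq_rpow, ← Real.rpow_natCast, ← Real.rpow_mul hS0]
    congr 1; field_simp
  rw [e1] at h3
  set g : Fin m → ℝ := fun j => ∏ i, l i j ^ (1 / (n:ℝ)) with hg
  have e2 : ∀ j, ‖A (fun i => x i j)‖ ^ (1 / (n:ℝ)) = W ^ (1 / (n:ℝ)) * (g j * a j) := fun j => by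
    have : (fun i => x i j) = fun i => ((weakNorm 𝕜 1 (x i) * l i j : ℝ) : 𝕜) • y i j :=
      funext fun i => hxy i j
    have hp : 0 ≤ ∏ i, l i j := Finset.prod_nonneg fun i _ => hl0 i j
    rw [this, A.map_smul_univ, norm_smul, norm_prod]
    simp_rw [RCLike.norm_ofReal, abs_of_nonneg (mul_nonneg (weakNorm_nonneg (x _) 1) (hl0 _ j))]
    rw [Finset.prod_mul_distrib, Real.mul_rpow (by positivity) (norm_nonneg _),
      Real.mul_rpow hW0 hp, ← Real.finsetProd_rpow _ _ (fun i _ => hl0 i j), mul_assoc]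
  simp_rw [e2]
  rw [← Finset.mul_sum, one_div_one_div, Real.rpow_natCast, mul_pow, one_div,
    Real.rpow_inv_natCast_pow hW0 (by omega)]
  have hgs : ∑ j, g j ^ 2 ≤ 1 := by
    calc ∑ j, g j ^ 2 ≤ ∑ j, ∑ i, (1 / (n:ℝ)) * l i j ^ 2 := by
          refine Finset.sum_le_sum fun j _ => ?_
          have := Real.geom_mean_le_arith_mean_weighted Finset.univ (fun _ : Fin n => 1 / (n:ℝ))
            (fun i => l i j ^ 2) (fun i _ => by positivity) (by simp [hn0])
            (fun i _ => by positivity)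
          refine le_trans (le_of_eq ?_) this
          rw [hg, ← Finset.prod_pow]
          refine Finset.prod_congr rfl fun i _ => ?_
          rw [← Real.rpow_natCast, ← Real.rpow_natCast, ← Real.rpow_mul (hl0 i j),
            ← Real.rpow_mul (hl0 i j), mul_comm]
      _ = 1 := by
          rw [Finset.sum_comm]
          simp_rw [← Finset.mul_sum, hl1]
          simp [hn0]
  have hg0 : ∀ j, 0 ≤ g j := fun j => Finset.prod_nonneg fun i _ => by
    have := hl0 i j; positivity
  have hsum : ∑ j, g j * a j ≤ √S := by
    refine (Real.sum_mul_le_sqrt_mul_sqrt _ _ _).trans ?_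
    have : √(∑ j, g j ^ 2) ≤ 1 := Real.sqrt_le_one.2 hgs
    calc _ ≤ 1 * √S := by gcongr
      _ = _ := one_mul _
  have hsum0 : 0 ≤ ∑ j, g j * a j := Finset.sum_nonneg fun j _ => mul_nonneg (hg0 j) (ha0 j)
  calc W * (∑ j, g j * a j) ^ n ≤ W * √S ^ n := by gcongr
    _ ≤ W * (C * ∏ i, weakNorm 𝕜 2 (y i)) := by gcongr
    _ ≤ W * (C * ∏ i, K i) := by
      gcongr with i
      · exact fun i _ => weakNorm_nonneg _ _
      · exact hy i
    _ = _ := by ring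

end
end Cot2

/-- If `E₁, …, Eₙ` have cotype 2, then for every Banach space `F` a continuous `n`-linear map
`A : E₁ × ⋯ × Eₙ → F` is absolutely `(1/n; 1, …, 1)`-summing iff it is absolutely
`(2/n; 2, …, 2)`-summing. -/
theorem cotype2_summing_equiv {𝕜 : Type*} [RCLike 𝕜] {n : ℕ} (hn : 1 ≤ n)
    (E : Fin n → Type*) [∀ i, NormedAddCommGroup (E i)] [∀ i, NormedSpace 𝕜 (E i)]
    [∀ i, CompleteSpace (E i)] (hcot : ∀ i, HasCotype2 (E i))
    (F : Type*) [NormedAddCommGroup F] [NormedSpace 𝕜 F] [CompleteSpace F]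
    (A : ContinuousMultilinearMap 𝕜 E F) :
    IsAbsSumming (1 / (n : ℝ)) (fun _ => 1) A ↔ IsAbsSumming (2 / (n : ℝ)) (fun _ => 2) A := by
  exact ⟨Cot2.dir1 hn A, Cot2.dir2 hn hcot A⟩
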